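/- There exists an integer k0 such that for every k >= k0, every density r = 2^k * ln 2 - rho with 0 < rho <= 2, and all sufficiently large n, the uniform random formula Phi = Phi_k(n, floor(r*n)) satisfies: (1) the expected number of satisfying assignments sigma of Phi under which more than k^{12} * 2^{-k} * n variables support at most 12 clauses is at most exp(-n * k^9 / 2^k) * E[|S(Phi)|]; (2) the expected number of satisfying assignments sigma of Phi under which more than (1 + 1/k^2) * 2^{-k} * n variables support no clause at all is at most exp(-n/(k^6 * 2^k)) * E[|S(Phi)|]. -/

import Mathlib

open Classical Finset Filter

noncomputable section

/-- A literal: a variable index together with a sign (`true` = positive occurrence). -/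
abbrev Lit (n : ℕ) := Fin n × Bool

/-- A clause: an ordered `k`-tuple of literals. -/
abbrev Clause (n k : ℕ) := Fin k → Lit n

/-- A `k`-CNF formula with `m` clauses over `n` variables. -/
abbrev Formula (n k m : ℕ) := Fin m → Clause n k

/-- A truth assignment. -/
abbrev Assignment (n : ℕ) := Fin n → Bool

/-- The truth value of a literal under an assignment. -/
def litVal {n : ℕ} (σ : Assignment n) (l : Lit n) : Bool :=
  if l.2 then σ l.1 else !(σ l.1)

/-- `σ` satisfies `Φ` if every clause contains at least one true literal. -/
def Satisfies {n k m : ℕ} (σ : Assignment n) (Φ : Formula n k m) : Prop :=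
  ∀ i : Fin m, ∃ j : Fin k, litVal σ (Φ i j) = true

/-- The set of satisfying assignments of `Φ`. -/
def satSet (n k m : ℕ) (Φ : Formula n k m) : Finset (Assignment n) :=
  univ.filter fun σ => Satisfies σ Φ

/-- The number of satisfying assignments of `Φ`. -/
def satCount (n k m : ℕ) (Φ : Formula n k m) : ℕ := (satSet n k m Φ).card

/-- Probability of an event under the uniformly random formula `Φ_k(n,m)`. -/
def prF (n k m : ℕ) (E : Formula n k m → Prop) : ℝ :=
  ((univ.filter fun Φ : Formula n k m => E Φ).card : ℝ) / (Fintype.card (Formula n k m) : ℝ)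

/-- Expectation of a function of the uniformly random formula `Φ_k(n,m)`. -/
def expF (n k m : ℕ) (f : Formula n k m → ℝ) : ℝ :=
  (∑ Φ : Formula n k m, f Φ) / (Fintype.card (Formula n k m) : ℝ)

/-- The number of occurrences of the literal `l` in `Φ`. -/
def occ (n k m : ℕ) (Φ : Formula n k m) (l : Lit n) : ℕ :=
  (univ.filter fun p : Fin m × Fin k => Φ p.1 p.2 = l).card

/-- The (signed) degree sequence of `Φ`. -/
def degSeq (n k m : ℕ) (Φ : Formula n k m) : Lit n → ℕ := occ n k m Φ

/-- Hamming distance between two assignments. -/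
def hdist {n : ℕ} (σ τ : Assignment n) : ℕ :=
  (univ.filter fun x => σ x ≠ τ x).card

/-- The majority-vote assignment: `x ↦ true` iff `x` occurs more often positively
than negatively. -/
def sigmaMaj (n k m : ℕ) (Φ : Formula n k m) : Assignment n :=
  fun x => decide (occ n k m Φ (x, false) < occ n k m Φ (x, true))

/-- Under `σ`, variable `x` supports clause `i` of `Φ` if some literal of `x` in that
clause is true under `σ` while all other literals of the clause are false. -/
def Supports (n k m : ℕ) (σ : Assignment n) (Φ : Formula n k m) (x : Fin n)
    (i : Fin m) : Prop :=
  ∃ j : Fin k, (Φ i j).1 = x ∧ litVal σ (Φ i j) = true ∧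
    ∀ j' : Fin k, j' ≠ j → litVal σ (Φ i j') = false

/-- The number of clauses supported by `x` under `σ`. -/
def supCount (n k m : ℕ) (σ : Assignment n) (Φ : Formula n k m) (x : Fin n) : ℕ :=
  (univ.filter fun i : Fin m => Supports n k m σ Φ x i).card

/-! ### Helper lemmas -/

lemma card_false {n : ℕ} (σ : Assignment n) :
    (univ.filter fun l : Lit n => litVal σ l = false).card = n := by
  have : (univ.filter fun l : Lit n => litVal σ l = false)
      = univ.image (fun x : Fin n => ((x, !(σ x)) : Lit n)) := by
    ext ⟨x, b⟩
    simp only [mem_filter, mem_univ, true_and, mem_image, litVal, Prod.mk.injEq]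
    cases b <;> cases h : σ x <;> simp [h]
  rw [this, card_image_of_injective]
  · simp
  · intro a b h
    exact (Prod.mk.inj h).1

lemma card_trueS {n : ℕ} (σ : Assignment n) (S : Finset (Fin n)) :
    (univ.filter fun l : Lit n => l.1 ∈ S ∧ litVal σ l = true).card = S.card := by
  have : (univ.filter fun l : Lit n => l.1 ∈ S ∧ litVal σ l = true)
      = S.image (fun x : Fin n => ((x, σ x) : Lit n)) := by
    ext ⟨x, b⟩
    simp only [mem_filter, mem_univ, true_and, mem_image, litVal, Prod.mk.injEq]
    cases b <;> cases h : σ x <;> simp [h]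
  rw [this, card_image_of_injective]
  intro a b h
  exact (Prod.mk.inj h).1

/-- A clause is satisfied. -/
def cSat {n k : ℕ} (σ : Assignment n) (c : Clause n k) : Prop :=
  ∃ j : Fin k, litVal σ (c j) = true

/-- A clause is supported by some variable of `S`. -/
def cSup {n k : ℕ} (σ : Assignment n) (S : Finset (Fin n)) (c : Clause n k) : Prop :=
  ∃ j : Fin k, (c j).1 ∈ S ∧ litVal σ (c j) = true ∧
    ∀ j' : Fin k, j' ≠ j → litVal σ (c j') = false

lemma card_cSat {n k : ℕ} (σ : Assignment n) :
    ((univ.filter fun c : Clause n k => cSat σ c).card : ℝ) = (2 ^ k - 1) * (n : ℝ) ^ k := by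
  have h1 : (univ.filter fun c : Clause n k => ¬ cSat σ c).card = n ^ k := by
    have : (univ.filter fun c : Clause n k => ¬ cSat σ c)
        = Fintype.piFinset (fun _ : Fin k => univ.filter fun l : Lit n => litVal σ l = false) := by
      ext c
      simp [cSat, Fintype.mem_piFinset]
    rw [this, Fintype.card_piFinset]
    simp [card_false]
  have h2 := Finset.card_filter_add_card_filter_not (s := (univ : Finset (Clause n k)))
    (fun c => cSat σ c)
  have h3 : (univ : Finset (Clause n k)).card = (n * 2) ^ k := by
    simp
  rw [h1, h3] at h2
  have h4 : ((univ.filter fun c : Clause n k => cSat σ c).card : ℝ) + (n : ℝ) ^ k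
      = ((n : ℝ) * 2) ^ k := by exact_mod_cast h2
  rw [mul_pow] at h4
  linarith

lemma card_cSup {n k : ℕ} (σ : Assignment n) (S : Finset (Fin n)) :
    (univ.filter fun c : Clause n k => cSup σ S c).card = k * (S.card * n ^ (k - 1)) := by
  have : (univ.filter fun c : Clause n k => cSup σ S c)
      = (univ : Finset (Fin k)).biUnion (fun j => Fintype.piFinset (fun j' : Fin k =>
          if j' = j then univ.filter fun l : Lit n => l.1 ∈ S ∧ litVal σ l = true
          else univ.filter fun l : Lit n => litVal σ l = false)) := by
    ext c
    rw [Finset.mem_filter]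
    simp only [mem_univ, true_and, mem_biUnion, Fintype.mem_piFinset]
    unfold cSup
    constructor
    · rintro ⟨j, h1, h2, h3⟩
      refine ⟨j, fun j' => ?_⟩
      by_cases h : j' = j
      · subst h; simp [h1, h2]
      · simp [h, h3 j' h]
    · rintro ⟨j, h⟩
      have hj := h j
      simp only [if_true, mem_filter, mem_univ, true_and] at hj
      refine ⟨j, hj.1, hj.2, fun j' hne => ?_⟩
      have := h j'
      simpa [hne] using this
  rw [this, card_biUnion]
  · have : ∀ j : Fin k, (Fintype.piFinset (fun j' : Fin k =>
          if j' = j then univ.filter fun l : Lit n => l.1 ∈ S ∧ litVal σ l = true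
          else univ.filter fun l : Lit n => litVal σ l = false)).card = S.card * n ^ (k - 1) := by
      intro j
      rw [Fintype.card_piFinset, ← Finset.mul_prod_erase univ _ (mem_univ j)]
      rw [if_pos rfl, card_trueS]
      congr 1
      rw [Finset.prod_congr rfl (g := fun _ => n)]
      · simp
      · intro x hx
        rw [if_neg (ne_of_mem_erase hx), card_false]
    simp [this]
  · intro j _ j' _ hne
    refine Finset.disjoint_left.2 ?_
    intro c h1 h2
    rw [Fintype.mem_piFinset] at h1 h2
    have a := h1 j
    have b := h2 j
    simp [hne] at a b
    simp [a.2] at b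

/-- clause weight -/
def cW {n k : ℕ} (σ : Assignment n) (S : Finset (Fin n)) (θ : ℝ) (c : Clause n k) : ℝ :=
  if cSat σ c then (if cSup σ S c then θ else 1) else 0

lemma sum_cW {n k : ℕ} (σ : Assignment n) (S : Finset (Fin n)) (θ : ℝ) :
    ∑ c : Clause n k, cW σ S θ c
      = (2 ^ k - 1) * (n : ℝ) ^ k - (1 - θ) * (k * (S.card * (n : ℝ) ^ (k - 1))) := by
  have h : ∀ c : Clause n k, cW σ S θ c
      = (if cSat σ c then (1 : ℝ) else 0) - (1 - θ) * (if cSup σ S c then (1 : ℝ) else 0) := by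
    intro c
    unfold cW
    by_cases h2 : cSup σ S c
    · have h1 : cSat σ c := by
        obtain ⟨j, _, h, _⟩ := h2
        exact ⟨j, h⟩
      simp [h1, h2]
    · simp [h2]
  simp_rw [h]
  rw [sum_sub_distrib, ← mul_sum, sum_boole, sum_boole, card_cSat, card_cSup]
  push_cast
  ring

lemma cW_nonneg {n k : ℕ} (σ : Assignment n) (S : Finset (Fin n)) {θ : ℝ} (h0 : 0 ≤ θ)
    (c : Clause n k) : 0 ≤ cW σ S θ c := by
  unfold cW; split_ifs <;> simp [h0]

lemma sum_cW_le {n k : ℕ} (hn : 0 < n) (hk : 0 < k) (σ : Assignment n) (S : Finset (Fin n))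
    (θ : ℝ) :
    ∑ c : Clause n k, cW σ S θ c
      ≤ ((2 ^ k - 1) * (n : ℝ) ^ k) *
        Real.exp (-((1 - θ) * (k / ((2 ^ k - 1) * n)))) ^ S.card := by
  rw [sum_cW, ← Real.exp_nat_mul]
  have hn' : (0 : ℝ) < n := by exact_mod_cast hn
  have h2 : (0 : ℝ) < 2 ^ k - 1 := by
    have : (1 : ℝ) < 2 ^ k := one_lt_pow₀ (by norm_num) (by omega)
    linarith
  have hA : (0 : ℝ) < (2 ^ k - 1) * (n : ℝ) ^ k := by positivity
  have key := Real.add_one_le_exp ((S.card : ℝ) * -((1 - θ) * (k / ((2 ^ k - 1) * n))))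
  refine le_trans (le_of_eq ?_) (mul_le_mul_of_nonneg_left key hA.le)
  obtain ⟨l, rfl⟩ : ∃ l, k = l + 1 := ⟨k - 1, by omega⟩
  simp only [Nat.add_sub_cancel]
  have h2' := h2.ne'
  field_simp
  ring

/-- satisfying indicator times product weights, summed over formulas. -/
lemma sum_weight_le {n k m : ℕ} (hn : 0 < n) (hk : 0 < k) (σ : Assignment n)
    (S : Finset (Fin n)) {θ : ℝ} (h0 : 0 ≤ θ) (h1 : θ ≤ 1) :
    ∑ Φ ∈ univ.filter (fun Φ : Formula n k m => Satisfies σ Φ),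
        ∏ x ∈ S, θ ^ (supCount n k m σ Φ x)
      ≤ ((2 ^ k - 1) * (n : ℝ) ^ k) ^ m *
        (Real.exp (-((1 - θ) * (k * m / ((2 ^ k - 1) * n))))) ^ S.card := by
  have step1 : ∑ Φ ∈ univ.filter (fun Φ : Formula n k m => Satisfies σ Φ),
        ∏ x ∈ S, θ ^ (supCount n k m σ Φ x)
      ≤ ∑ Φ : Formula n k m, ∏ i : Fin m, cW σ S θ (Φ i) := by
    rw [sum_filter]
    refine sum_le_sum fun Φ _ => ?_
    split_ifs with hs
    · have e : ∏ x ∈ S, θ ^ (supCount n k m σ Φ x)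
          = ∏ i : Fin m, ∏ x ∈ S, (if Supports n k m σ Φ x i then θ else 1) := by
        rw [Finset.prod_comm]
        refine prod_congr rfl fun x _ => ?_
        rw [← prod_filter, prod_const, supCount]
      rw [e]
      refine prod_le_prod (fun i _ => prod_nonneg fun x _ => by split_ifs <;> simp [h0])
        fun i _ => ?_
      have hsat : cSat σ (Φ i) := hs i
      unfold cW
      rw [if_pos hsat]
      split_ifs with hsup
      · obtain ⟨j, hj1, hj2, hj3⟩ := hsup
        rw [← mul_prod_erase S _ hj1, if_pos ⟨j, rfl, hj2, hj3⟩]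
        refine mul_le_of_le_one_right h0 (prod_le_one (fun x _ => ?_) fun x _ => ?_)
        · split_ifs <;> simp [h0]
        · split_ifs <;> simp [h1]
      · refine prod_le_one (fun x _ => ?_) fun x _ => ?_
        · split_ifs <;> simp [h0]
        · split_ifs <;> simp [h1]
    · exact prod_nonneg fun i _ => cW_nonneg σ S h0 _
  have step2 : ∑ Φ : Formula n k m, ∏ i : Fin m, cW σ S θ (Φ i)
      = (∑ c : Clause n k, cW σ S θ c) ^ m := by
    have := Finset.prod_univ_sum (fun _ : Fin m => (univ : Finset (Clause n k)))
      (fun _ c => cW σ S θ c)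
    rw [Fintype.piFinset_univ] at this
    rw [← this]; simp
  refine step1.trans ?_
  rw [step2]
  refine (pow_le_pow_left₀ (sum_nonneg fun c _ => cW_nonneg σ S h0 c)
    (sum_cW_le hn hk σ S θ) m).trans (le_of_eq ?_)
  rw [mul_pow, ← pow_mul, mul_comm S.card m, pow_mul, ← Real.exp_nat_mul]
  congr 4
  ring

lemma card_sat {n k m : ℕ} (σ : Assignment n) :
    ((univ.filter (fun Φ : Formula n k m => Satisfies σ Φ)).card : ℝ)
      = ((2 ^ k - 1) * (n : ℝ) ^ k) ^ m := by
  have : (univ.filter (fun Φ : Formula n k m => Satisfies σ Φ))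
      = Fintype.piFinset (fun _ : Fin m => univ.filter fun c : Clause n k => cSat σ c) := by
    ext Φ
    rw [Finset.mem_filter, Fintype.mem_piFinset]
    simp only [Finset.mem_filter, mem_univ, true_and]
    rfl
  rw [this, Fintype.card_piFinset]
  simp [← card_cSat σ]

lemma core {n k m : ℕ} (hn : 0 < n) (hk : 0 < k) (σ : Assignment n) (c : ℕ) {θ C t : ℝ}
    (h0 : 0 ≤ θ) (h1 : θ ≤ 1) (hC0 : 0 ≤ C) (ht : 0 ≤ t) (hC : ∀ N ≤ c, 1 ≤ C * θ ^ N) (z : ℝ) :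
    ((univ.filter fun Φ : Formula n k m => Satisfies σ Φ ∧
        z < ((univ.filter fun x : Fin n => supCount n k m σ Φ x ≤ c).card : ℝ)).card : ℝ)
      ≤ (Real.exp (n * (t * C * Real.exp (-((1 - θ) * (k * m / ((2 ^ k - 1) * n)))))
          - z * Real.log (1 + t))) *
        ((univ.filter (fun Φ : Formula n k m => Satisfies σ Φ)).card : ℝ) := by
  set Q := Real.exp (-((1 - θ) * (k * m / ((2 ^ k - 1) * n)))) with hQ
  set A := ((2 ^ k - 1) * (n : ℝ) ^ k) ^ m with hA
  have ht1 : 0 < 1 + t := by linarith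
  have hA0 : 0 ≤ A := by rw [hA, ← card_sat σ]; positivity
  -- upper bound of the moment generating function
  have up : ∑ Φ ∈ univ.filter (fun Φ : Formula n k m => Satisfies σ Φ),
      ∏ x : Fin n, (1 + t * C * θ ^ (supCount n k m σ Φ x)) ≤ A * (1 + t * C * Q) ^ n := by
    have e1 : ∀ Φ : Formula n k m, ∏ x : Fin n, (1 + t * C * θ ^ (supCount n k m σ Φ x))
        = ∑ S ∈ (univ : Finset (Fin n)).powerset,
          (t * C) ^ S.card * ∏ x ∈ S, θ ^ (supCount n k m σ Φ x) := by
      intro Φ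
      rw [prod_one_add]
      refine sum_congr rfl fun S _ => ?_
      rw [prod_mul_distrib, prod_const]
    simp_rw [e1]
    rw [sum_comm]
    have e2 : A * (1 + t * C * Q) ^ n
        = ∑ S ∈ (univ : Finset (Fin n)).powerset, (t * C) ^ S.card * (A * Q ^ S.card) := by
      have := prod_one_add (s := (univ : Finset (Fin n))) (f := fun _ => t * C * Q)
      simp only [prod_const, card_univ, Fintype.card_fin] at this
      rw [this, mul_sum]
      refine sum_congr rfl fun S _ => ?_
      rw [mul_pow]; ring
    rw [e2]
    refine sum_le_sum fun S _ => ?_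
    rw [← mul_sum]
    exact mul_le_mul_of_nonneg_left (sum_weight_le hn hk σ S h0 h1) (by positivity)
  have low : ((univ.filter fun Φ : Formula n k m => Satisfies σ Φ ∧
        z < ((univ.filter fun x : Fin n => supCount n k m σ Φ x ≤ c).card : ℝ)).card : ℝ)
        * Real.exp (z * Real.log (1 + t))
      ≤ ∑ Φ ∈ univ.filter (fun Φ : Formula n k m => Satisfies σ Φ),
      ∏ x : Fin n, (1 + t * C * θ ^ (supCount n k m σ Φ x)) := by
    have pos : ∀ Φ : Formula n k m,
        0 ≤ ∏ x : Fin n, (1 + t * C * θ ^ (supCount n k m σ Φ x)) :=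
      fun Φ => prod_nonneg fun x _ => by positivity
    rw [← filter_filter]
    refine le_trans ?_ (sum_le_sum_of_subset_of_nonneg (Finset.filter_subset (fun Φ : Formula n k m => z <
        ((univ.filter fun x : Fin n => supCount n k m σ Φ x ≤ c).card : ℝ)) _) fun Φ _ _ => pos Φ)
    rw [← nsmul_eq_mul]
    refine card_nsmul_le_sum _ _ _ fun Φ hΦ => ?_
    have hz := (mem_filter.1 hΦ).2
    set Z := (univ.filter fun x : Fin n => supCount n k m σ Φ x ≤ c).card with hZ
    have a1 : Real.exp (z * Real.log (1 + t)) ≤ (1 + t) ^ Z := by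
      rw [← Real.exp_log (pow_pos ht1 Z), Real.log_pow]
      apply Real.exp_le_exp.2
      exact mul_le_mul_of_nonneg_right hz.le (Real.log_nonneg (by linarith))
    refine a1.trans ?_
    rw [hZ, ← prod_const, prod_filter]
    refine prod_le_prod (fun x _ => by split_ifs <;> linarith) fun x _ => ?_
    split_ifs with hx
    · have := hC _ hx
      nlinarith
    · have : 0 ≤ t * C * θ ^ (supCount n k m σ Φ x) := by positivity
      linarith
  rw [card_sat, ← hA]
  have hexp : (1 + t * C * Q) ^ n ≤ Real.exp (n * (t * C * Q)) := by
    rw [Real.exp_nat_mul]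
    refine pow_le_pow_left₀ (by positivity) ?_ n
    linarith [Real.add_one_le_exp (t * C * Q)]
  rw [Real.exp_sub, div_mul_eq_mul_div, le_div_iff₀ (Real.exp_pos _)]
  refine (low.trans up).trans ?_
  rw [mul_comm]
  exact mul_le_mul_of_nonneg_right hexp hA0

lemma expF_le {n k m : ℕ} (P : Assignment n → Formula n k m → Prop) (B : ℝ)
    (h : ∀ σ, ((univ.filter fun Φ : Formula n k m => Satisfies σ Φ ∧ P σ Φ).card : ℝ)
      ≤ B * ((univ.filter (fun Φ : Formula n k m => Satisfies σ Φ)).card : ℝ)) :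
    expF n k m (fun Φ => ((univ.filter fun σ : Assignment n => Satisfies σ Φ ∧ P σ Φ).card : ℝ))
      ≤ B * expF n k m fun Φ => (satCount n k m Φ : ℝ) := by
  unfold expF satCount satSet
  rw [← mul_div_assoc]
  refine div_le_div_of_nonneg_right ?_ (by positivity)
  simp_rw [← sum_boole]
  rw [sum_comm, sum_comm (s := (univ : Finset (Formula n k m))), mul_sum]
  refine sum_le_sum fun σ _ => ?_
  rw [sum_boole, sum_boole]
  exact h σ

/-- the bound on the exponent -/
lemma expo_bound {n k m : ℕ} (hn : 0 < n) (hk : 3 ≤ k) {rho : ℝ} (hr : rho ≤ 2)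
    (hm : m = ⌊(2 ^ k * Real.log 2 - rho) * (n : ℝ)⌋₊) :
    (k : ℝ) * Real.log 2 - 3 * k / 2 ^ k ≤ k * m / ((2 ^ k - 1) * n) := by
  have hn' : (1 : ℝ) ≤ n := by exact_mod_cast hn
  have h8 : (8 : ℝ) ≤ 2 ^ k := by
    calc (8 : ℝ) = 2 ^ 3 := by norm_num
      _ ≤ 2 ^ k := pow_le_pow_right₀ (by norm_num) hk
  have hl := Real.log_two_gt_d9
  have hX : 0 ≤ 2 ^ k * Real.log 2 - 3 := by nlinarith
  have hm1 : (2 ^ k * Real.log 2 - 3) * (n : ℝ) ≤ m := by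
    have := Nat.lt_floor_add_one ((2 ^ k * Real.log 2 - rho) * (n : ℝ))
    rw [← hm] at this
    nlinarith
  have hk0 : (0 : ℝ) ≤ k := by positivity
  rw [le_div_iff₀ (by nlinarith)]
  have e : (k : ℝ) * Real.log 2 - 3 * k / 2 ^ k = k * (2 ^ k * Real.log 2 - 3) / 2 ^ k := by
    field_simp
  rw [e, div_mul_eq_mul_div, div_le_iff₀ (by positivity)]
  have a1 : k * (2 ^ k * Real.log 2 - 3) * ((2 ^ k - 1) * (n : ℝ))
      ≤ (k * (2 ^ k * Real.log 2 - 3) * n) * 2 ^ k := by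
    have : 0 ≤ k * (2 ^ k * Real.log 2 - 3) * (n : ℝ) := by positivity
    nlinarith
  refine a1.trans (mul_le_mul_of_nonneg_right ?_ (by positivity))
  nlinarith

lemma exists_k0 : ∃ k0 : ℕ, ∀ k : ℕ, k0 ≤ k → 12 ≤ k ∧ 24 * (k : ℝ) ^ 3 ≤ 2 ^ k := by
  have h := tendsto_pow_const_div_const_pow_of_one_lt 3 (r := (2 : ℝ)) (by norm_num)
  have h2 := h.eventually (gt_mem_nhds (show (0 : ℝ) < 1 / 24 by norm_num))
  obtain ⟨K, hK⟩ := eventually_atTop.1 h2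
  refine ⟨max K 12, fun k hk => ⟨le_trans (le_max_right _ _) hk, ?_⟩⟩
  have := hK k (le_trans (le_max_left _ _) hk)
  rw [div_lt_iff₀ (by positivity)] at this
  linarith

lemma exp_le_aux {x : ℝ} (h0 : 0 ≤ x) (h1 : x ≤ 1 / 2) : Real.exp x ≤ 1 + 2 * x := by
  have h := Real.add_one_le_exp (-x)
  rw [Real.exp_neg] at h
  have hp := Real.exp_pos x
  have : (-x + 1) * Real.exp x ≤ 1 := by
    calc (-x + 1) * Real.exp x ≤ (Real.exp x)⁻¹ * Real.exp x := by gcongr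
      _ = 1 := inv_mul_cancel₀ hp.ne'
  nlinarith

lemma exp_klog (k : ℕ) : Real.exp (-(k * Real.log 2)) = ((2 : ℝ) ^ k)⁻¹ := by
  rw [Real.exp_neg, Real.exp_nat_mul, Real.exp_log (by norm_num)]

/-- For `k ≥ k0`, `r = 2^k ln 2 - ρ` with `0 < ρ ≤ 2`, and all large `n`:
(1) the expected number of satisfying assignments under which more than `k^12 2^{-k} n`
variables support at most 12 clauses is at most `exp(-n k^9/2^k) E[|S(Φ)|]`;
(2) the expected number of satisfying assignments under which more than
`(1 + 1/k²) 2^{-k} n` variables support no clause is at most `exp(-n/(k^6 2^k)) E[|S(Φ)|]`. -/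
theorem statement11 :
    ∃ k0 : ℕ, ∀ k : ℕ, k0 ≤ k → ∀ rho : ℝ, 0 < rho → rho ≤ 2 →
      ∃ N : ℕ, ∀ n : ℕ, N ≤ n →
        let m := ⌊(2 ^ k * Real.log 2 - rho) * (n : ℝ)⌋₊
        (expF n k m (fun Φ =>
              ((univ.filter fun σ : Assignment n =>
                  Satisfies σ Φ ∧
                    (k : ℝ) ^ 12 * ((2 : ℝ) ^ k)⁻¹ * n <
                      ((univ.filter fun x : Fin n =>
                          supCount n k m σ Φ x ≤ 12).card : ℝ)).card : ℝ)) ≤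
            Real.exp (-(n : ℝ) * (k : ℝ) ^ 9 / 2 ^ k) *
              expF n k m fun Φ => (satCount n k m Φ : ℝ)) ∧
        (expF n k m (fun Φ =>
              ((univ.filter fun σ : Assignment n =>
                  Satisfies σ Φ ∧
                    (1 + 1 / (k : ℝ) ^ 2) * ((2 : ℝ) ^ k)⁻¹ * n <
                      ((univ.filter fun x : Fin n =>
                          supCount n k m σ Φ x = 0).card : ℝ)).card : ℝ)) ≤
            Real.exp (-(n : ℝ) / ((k : ℝ) ^ 6 * 2 ^ k)) *
              expF n k m fun Φ => (satCount n k m Φ : ℝ)) := by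
  obtain ⟨k0, hk0⟩ := exists_k0
  refine ⟨k0, fun k hk rho _ hr2 => ⟨1, fun n hn => ?_⟩⟩
  intro m
  obtain ⟨hk12, hkb⟩ := hk0 k hk
  have hE := expo_bound (m := m) hn (by omega : 3 ≤ k) hr2 rfl
  have hn' : (0 : ℝ) < n := by exact_mod_cast hn
  have hkr : (12 : ℝ) ≤ k := by exact_mod_cast hk12
  have h2k : (0 : ℝ) < 2 ^ k := by positivity
  set y : ℝ := 3 * k / 2 ^ k with hy
  set M : ℝ := k * m / ((2 ^ k - 1) * n) with hM
  have hy0 : 0 ≤ y := by positivity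
  have hyb : y ≤ 1 / (8 * (k : ℝ) ^ 2) := by
    rw [hy, div_le_div_iff₀ (by positivity) (by positivity)]
    nlinarith
  have hyh : y ≤ 1 / 2 := by
    refine hyb.trans ?_
    rw [div_le_div_iff₀ (by positivity) (by norm_num)]
    nlinarith
  have hey := exp_le_aux hy0 hyh
  constructor
  · refine expF_le (fun σ Φ => (k : ℝ) ^ 12 * ((2 : ℝ) ^ k)⁻¹ * n <
      ((univ.filter fun x : Fin n => supCount n k m σ Φ x ≤ 12).card : ℝ)) _ fun σ => ?_
    have hθ0 : (0 : ℝ) < 12 / k := by positivity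
    have hθ1 : (12 : ℝ) / k ≤ 1 := by rw [div_le_one (by positivity)]; exact hkr
    refine (core (t := 1) (C := ((12 / k : ℝ) ^ 12)⁻¹) hn (by omega) σ 12 hθ0.le hθ1
      (by positivity) (by norm_num) ?_ _).trans ?_
    · intro N hN
      rw [← div_eq_inv_mul, one_le_div (by positivity)]
      exact pow_le_pow_of_le_one hθ0.le hθ1 hN
    refine mul_le_mul_of_nonneg_right (Real.exp_le_exp.2 ?_) (by positivity)
    rw [← hM]
    have hQ : Real.exp (-((1 - 12 / k) * M)) ≤ ((2 : ℝ) ^ k)⁻¹ * 2 ^ 12 * 2 := by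
      have : -((1 - 12 / k) * M) ≤ -(k * Real.log 2) + ((12 : ℕ) * Real.log 2) + y := by
        have a : (1 - 12 / k) * (k * Real.log 2 - y) ≤ (1 - 12 / k) * M :=
          mul_le_mul_of_nonneg_left hE (by linarith)
        have b : (1 - 12 / k) * (k * Real.log 2 - y)
            = k * Real.log 2 - 12 * Real.log 2 - y + 12 / k * y := by
          field_simp; ring
        have c : 0 ≤ 12 / k * y := by positivity
        push_cast
        linarith
      refine (Real.exp_le_exp.2 this).trans ?_
      rw [Real.exp_add, Real.exp_add, exp_klog, Real.exp_nat_mul, Real.exp_log (by norm_num)]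
      refine mul_le_mul_of_nonneg_left ?_ (by positivity)
      linarith
    have hC : 1 * ((12 / k : ℝ) ^ 12)⁻¹ * Real.exp (-((1 - 12 / k) * M))
        ≤ (k : ℝ) ^ 12 * ((2 : ℝ) ^ k)⁻¹ * (1 / 100) := by
      calc 1 * ((12 / k : ℝ) ^ 12)⁻¹ * Real.exp (-((1 - 12 / k) * M))
          ≤ 1 * ((12 / k : ℝ) ^ 12)⁻¹ * (((2 : ℝ) ^ k)⁻¹ * 2 ^ 12 * 2) := by gcongr
        _ = (k : ℝ) ^ 12 * ((2 : ℝ) ^ k)⁻¹ * (2 ^ 12 * 2 / 12 ^ 12) := by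
          rw [div_pow, inv_div]; ring
        _ ≤ _ := by
          refine mul_le_mul_of_nonneg_left ?_ (by positivity)
          norm_num
    have hl := Real.log_two_gt_d9
    have h11 : (1 : ℝ) + 1 = 2 := by norm_num
    rw [h11]
    have hW : 0 ≤ (n : ℝ) * ((k : ℝ) ^ 12 * ((2 : ℝ) ^ k)⁻¹) := by positivity
    have hk9 : (k : ℝ) ^ 9 * 2 ≤ (k : ℝ) ^ 12 := by
      have : (2 : ℝ) ≤ (k : ℝ) ^ 3 := by nlinarith [pow_le_pow_left₀ (by norm_num) hkr 3]
      calc (k : ℝ) ^ 9 * 2 ≤ (k : ℝ) ^ 9 * (k : ℝ) ^ 3 := by gcongr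
        _ = _ := by ring
    have h9 : (n : ℝ) * (k : ℝ) ^ 9 / 2 ^ k * 2 ≤ (n : ℝ) * ((k : ℝ) ^ 12 * ((2 : ℝ) ^ k)⁻¹) := by
      calc (n : ℝ) * (k : ℝ) ^ 9 / 2 ^ k * 2 = n * ((k : ℝ) ^ 9 * 2 * ((2 : ℝ) ^ k)⁻¹) := by
            ring
        _ ≤ _ := by gcongr
    have := mul_le_mul_of_nonneg_left hC hn'.le
    have e : -(n : ℝ) * (k : ℝ) ^ 9 / 2 ^ k = -((n : ℝ) * (k : ℝ) ^ 9 / 2 ^ k) := by ring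
    rw [e]
    nlinarith
  · have := expF_le (n := n) (k := k) (m := m) (fun σ Φ => (1 + 1 / (k : ℝ) ^ 2) *
      ((2 : ℝ) ^ k)⁻¹ * n <
      ((univ.filter fun x : Fin n => supCount n k m σ Φ x ≤ 0).card : ℝ))
      (Real.exp (-(n : ℝ) / ((k : ℝ) ^ 6 * 2 ^ k))) fun σ => ?_
    · simpa only [Nat.le_zero] using this
    set ε : ℝ := 1 / (k : ℝ) ^ 2 with hε
    have hε0 : 0 < ε := by positivity
    have hε1 : ε ≤ 1 / 144 := by
      rw [hε, div_le_div_iff₀ (by positivity) (by norm_num)]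
      nlinarith
    refine (core (t := ε / 4) (C := 1) hn (by omega) σ 0 le_rfl zero_le_one
      zero_le_one (by positivity) ?_ _).trans ?_
    · intro N hN
      obtain rfl : N = 0 := by omega
      simp
    refine mul_le_mul_of_nonneg_right (Real.exp_le_exp.2 ?_) (by positivity)
    rw [← hM]
    have hyε : y ≤ ε / 8 := by
      refine hyb.trans (le_of_eq ?_)
      rw [hε]; field_simp
    have hQ : Real.exp (-((1 - 0) * M)) ≤ ((2 : ℝ) ^ k)⁻¹ * (1 + ε / 4) := by
      have : -((1 - 0) * M) ≤ -(k * Real.log 2) + y := by linarith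
      refine (Real.exp_le_exp.2 this).trans ?_
      rw [Real.exp_add, exp_klog]
      refine mul_le_mul_of_nonneg_left ?_ (by positivity)
      linarith
    have hlog : ε / 4 - (ε / 4) ^ 2 ≤ Real.log (1 + ε / 4) := by
      have h := Real.one_sub_inv_le_log_of_pos (show 0 < 1 + ε / 4 by positivity)
      refine le_trans ?_ h
      rw [le_sub_comm, inv_le_iff_one_le_mul₀ (by positivity)]
      nlinarith [pow_pos hε0 3]
    have hW : 0 < (n : ℝ) * ((2 : ℝ) ^ k)⁻¹ := by positivity
    have e : -(n : ℝ) / ((k : ℝ) ^ 6 * 2 ^ k) = (n : ℝ) * ((2 : ℝ) ^ k)⁻¹ * (-ε ^ 3) := by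
      rw [hε]; field_simp
    rw [e]
    have s1 : (n : ℝ) * (ε / 4 * 1 * Real.exp (-((1 - 0) * M)))
        ≤ n * (ε / 4 * 1 * (((2 : ℝ) ^ k)⁻¹ * (1 + ε / 4))) := by gcongr
    have s2 : (1 + ε) * ((2 : ℝ) ^ k)⁻¹ * n * (ε / 4 - (ε / 4) ^ 2)
        ≤ (1 + ε) * ((2 : ℝ) ^ k)⁻¹ * n * Real.log (1 + ε / 4) := by gcongr
    have s3 : ε / 4 * (1 + ε / 4) - (1 + ε) * (ε / 4 - (ε / 4) ^ 2) ≤ -ε ^ 3 := by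
      nlinarith [pow_pos hε0 2, pow_pos hε0 3]
    have s4 := mul_le_mul_of_nonneg_left s3 hW.le
    refine le_trans ?_ s4
    linarith
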